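/- Let b > 1 and n > 1 be integers and a a positive integer with gcd(r_b(n), a) = 1. The set of maximal elements of Ap(S_a(b,n), a_1) with respect to the partial order ≼ defined by y ≼ x iff x − y ∈ S_a(b,n) is exactly { a_i + (b−1)·∑_{j=i}^n a_j : i = 2, …, n }. -/

import Mathlib

/-- The repunit number in base `b` of length `ℓ`: `r_b(ℓ) = ∑_{j=0}^{ℓ-1} b^j`. -/
def repunit (b ℓ : ℕ) : ℕ := ∑ j ∈ Finset.range ℓ, b ^ j

/-- The sequence `a_i = r_b(n) + a·r_b(i-1)`. -/
def aseq (b a n i : ℕ) : ℕ := repunit b n + a * repunit b (i - 1)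

/-- The additive submonoid `S_a(b,n)` of `ℕ` generated by `{a_i : i ≥ 1}`. -/
def grep (b a n : ℕ) : AddSubmonoid ℕ :=
  AddSubmonoid.closure {x | ∃ i, 1 ≤ i ∧ x = aseq b a n i}

/-- The Apéry set of `S` with respect to `s`: elements `ω ∈ S` with `ω - s ∉ S`
(i.e. there is no `t ∈ S` with `ω = t + s`). -/
def Apery (S : AddSubmonoid ℕ) (s : ℕ) : Set ℕ :=
  {ω | ω ∈ S ∧ ¬ ∃ t ∈ S, ω = t + s}

/-!
Each generator is `a_{e+1} = r_b(n) + a * r_b(e)`, so `S_a(b,n)` consists of the numbers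
`k * r_b(n) + a * m` with `m` a sum of `k` repunits. Since `(b - 1) * r_b(e) + 1 = b ^ e`, such a
decomposition of `m` writes `(b - 1) * m + k` as a sum of `k` powers of `b`, which is possible if
and only if the base-`b` digit sum of this number is at most `k`. Let `ℓ(m)` be the least such `k`.
Folding digits modulo `b ^ n - 1` shows `ℓ(m % r_b(n)) ≤ ℓ(m)`, so the Apéry set consists of the
elements `ℓ(m) * r_b(n) + a * m` with `m < r_b(n)`, and `≼` between two of them forces both
parameters `m` and `ℓ(m)` to grow. Complementing digits in `b ^ n - 1` yields, for every
`m < r_b(n)`, some `m' ≥ m` with `ℓ(m') = ℓ(m) + ℓ(m' - m)` and `m' = r_b(n) - 1 - d`, where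
`d ≤ n - 2`. There `ℓ(m') = (b - 1) * (d + 1) + 1`, which decreases as `m'` grows, so these
elements are pairwise incomparable; they are the stated ones, with `i = n - d`.
-/

section DigitSum

variable {b : ℕ}

theorem sum_digits_pow_mul_add (hb : 1 < b) (n q : ℕ) {r : ℕ} (hr : r < b ^ n) :
    (b.digits (b ^ n * q + r)).sum = (b.digits q).sum + (b.digits r).sum := by
  rcases q.eq_zero_or_pos with rfl | hq
  · simp
  have hlen : (b.digits r).length ≤ n := (Nat.digits_length_le_iff hb r).2 hr
  have happend := Nat.digits_append_zeroes_append_digits (n := r)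
    (k := n - (b.digits r).length) hb hq
  rw [Nat.add_sub_cancel' hlen] at happend
  rw [add_comm (b ^ n * q), ← happend]
  simp [add_comm]

theorem sum_digits_mul_add (hb : 1 < b) (q : ℕ) {r : ℕ} (hr : r < b) :
    (b.digits (b * q + r)).sum = (b.digits q).sum + r := by
  have hdigit : (b.digits r).sum = r := by
    rcases eq_or_ne r 0 with rfl | hr0
    · simp
    · simp [Nat.digits_of_lt b r hr0 hr]
  simpa [hdigit] using sum_digits_pow_mul_add hb 1 q (r := r) (by simpa using hr)

theorem sum_digits_pow (hb : 1 < b) (n : ℕ) : (b.digits (b ^ n)).sum = 1 := by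
  simpa [Nat.digits_of_lt b 1 one_ne_zero hb] using
    sum_digits_pow_mul_add hb n 1 (Nat.pow_pos (n := n) (by omega : 0 < b))

theorem sum_digits_add_le (hb : 1 < b) (x y : ℕ) :
    (b.digits (x + y)).sum ≤ (b.digits x).sum + (b.digits y).sum := by
  induction hs : x + y using Nat.strong_induction_on generalizing x y with
  | _ s ih =>
    subst hs
    have hx := Nat.div_add_mod x b
    have hy := Nat.div_add_mod y b
    have hxr : x % b < b := Nat.mod_lt _ (by omega)
    have hyr : y % b < b := Nat.mod_lt _ (by omega)
    generalize x / b = p, x % b = r, y / b = q, y % b = t at hx hy hxr hyr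
    subst hx hy
    rw [sum_digits_mul_add hb p hxr, sum_digits_mul_add hb q hyr]
    have hadd : b * p + r + (b * q + t) = b * (p + q) + (r + t) := by ring
    have hgrow : 2 * (p + q) ≤ b * (p + q) := Nat.mul_le_mul_right _ hb
    rw [hadd] at ih ⊢
    rcases Nat.eq_zero_or_pos (p + q + (r + t)) with hzero | hpos
    · obtain ⟨⟨rfl, rfl⟩, rfl, rfl⟩ : (p = 0 ∧ q = 0) ∧ r = 0 ∧ t = 0 := by omega
      simp
    have hquot := ih (p + q) (by omega) p q rfl
    rcases lt_or_ge (r + t) b with hnocarry | hcarry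
    · rw [sum_digits_mul_add hb _ hnocarry]
      omega
    · have hsucc := ih (p + q + 1) (by omega) (p + q) 1 rfl
      rw [Nat.digits_of_lt b 1 one_ne_zero hb, List.sum_singleton] at hsucc
      have hshift : b * (p + q) + (r + t) = b * (p + q + 1) + (r + t - b) := by
        rw [mul_add_one]
        omega
      rw [hshift, sum_digits_mul_add hb _ (by omega)]
      omega

theorem sum_digits_add_sum_digits_of_add_add_one_eq_pow (hb : 1 < b) {n x y : ℕ}
    (h : x + y + 1 = b ^ n) : (b.digits x).sum + (b.digits y).sum = n * (b - 1) := by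
  induction n generalizing x y with
  | zero =>
    obtain ⟨rfl, rfl⟩ : x = 0 ∧ y = 0 := by simpa using h
    simp
  | succ n ih =>
    have hx := Nat.div_add_mod x b
    have hy := Nat.div_add_mod y b
    have hxr : x % b < b := Nat.mod_lt _ (by omega)
    have hyr : y % b < b := Nat.mod_lt _ (by omega)
    generalize x / b = p, x % b = r, y / b = q, y % b = t at hx hy hxr hyr
    subst hx hy
    have hsum : b * (p + q) + (r + t + 1) = b * b ^ n := by
      rw [← pow_succ', ← h]
      ring
    have hlast : r + t + 1 = b := by
      obtain ⟨c, hc⟩ : b ∣ r + t + 1 :=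
        (Nat.dvd_add_right (dvd_mul_right b _)).1 (hsum ▸ dvd_mul_right b _)
      obtain rfl : c = 1 := by
        have hc2 : c < 2 := Nat.lt_of_mul_lt_mul_left (a := b) (by omega)
        have hc0 : c ≠ 0 := by
          rintro rfl
          omega
        omega
      omega
    have hrest : p + q + 1 = b ^ n := by
      rw [hlast] at hsum
      exact Nat.eq_of_mul_eq_mul_left (by omega : 0 < b) (by rw [← hsum, mul_add_one])
    have hdigits := ih hrest
    rw [sum_digits_mul_add hb p hxr, sum_digits_mul_add hb q hyr, add_one_mul]
    omega

/- Writing `N = b ^ n * q + r`, the number `q + r` is congruent to `N` modulo `b ^ n - 1` and its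
digit sum is at most that of `N`; iterating brings `N` down to its residue in `[1, b ^ n - 1]`. -/
theorem sum_digits_le_of_modEq (hb : 1 < b) {n N₀ N : ℕ} (hN₀ : 0 < N₀) (hlt : N₀ < b ^ n)
    (hN : 0 < N) (h : N₀ ≡ N [MOD b ^ n - 1]) : (b.digits N₀).sum ≤ (b.digits N).sum := by
  induction N using Nat.strong_induction_on with
  | _ N ih =>
    rcases lt_or_ge N (b ^ n) with hsmall | hlarge
    · rw [h.eq_of_abs_lt (by rw [abs_lt]; omega)]
    have hdiv := Nat.div_add_mod N (b ^ n)
    have hr : N % b ^ n < b ^ n := Nat.mod_lt _ (by omega)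
    have hq : 0 < N / b ^ n := Nat.div_pos hlarge (by omega)
    generalize N / b ^ n = q, N % b ^ n = r at hdiv hr hq
    have hfold : N = q + r + (b ^ n - 1) * q := by
      rw [← hdiv, Nat.sub_one_mul]
      have := Nat.le_mul_of_pos_left q (by omega : 0 < b ^ n)
      omega
    have hcycle : 0 < (b ^ n - 1) * q := by
      rw [← hdiv] at hlarge
      apply Nat.mul_pos _ hq
      omega
    have hmod : N₀ ≡ q + r [MOD b ^ n - 1] := by
      rw [hfold] at h
      exact h.trans (by simp [Nat.ModEq])
    calc (b.digits N₀).sum ≤ (b.digits (q + r)).sum := ih (q + r) (by omega) (by omega) hmod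
      _ ≤ (b.digits q).sum + (b.digits r).sum := sum_digits_add_le hb q r
      _ = (b.digits N).sum := by rw [← hdiv, sum_digits_pow_mul_add hb n q hr]

end DigitSum

section Repunit

theorem repunit_zero (b : ℕ) : repunit b 0 = 0 :=
  Finset.sum_range_zero _

theorem repunit_succ (b n : ℕ) : repunit b (n + 1) = b * repunit b n + 1 :=
  geom_sum_succ

theorem sub_one_mul_repunit_add_one {b : ℕ} (hb : 0 < b) (n : ℕ) :
    (b - 1) * repunit b n + 1 = b ^ n := by
  obtain ⟨c, rfl⟩ := Nat.exists_eq_succ_of_ne_zero hb.ne'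
  simpa [repunit, mul_comm] using geom_sum_mul_add c n

theorem le_repunit {b : ℕ} (hb : 0 < b) (n : ℕ) : n ≤ repunit b n := by
  simpa [repunit] using Finset.card_nsmul_le_sum (Finset.range n) (b ^ ·) 1
    fun j _ ↦ Nat.one_le_pow j b hb

theorem repunit_add_sub_one_mul_sum_Icc {b : ℕ} (hb : 0 < b) {i n : ℕ} (hi : 0 < i)
    (hin : i ≤ n) :
    repunit b (i - 1) + (b - 1) * ∑ j ∈ Finset.Icc i n, repunit b (j - 1) + (n - i + 1) =
      repunit b n := by
  have hstep (k : ℕ) : repunit b (k + 1) = repunit b k + (b - 1) * repunit b k + 1 := by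
    rw [repunit_succ, Nat.sub_one_mul]
    have := Nat.le_mul_of_pos_left (repunit b k) hb
    omega
  induction n, hin using Nat.le_induction with
  | base => simpa [Nat.sub_add_cancel hi] using (hstep (i - 1)).symm
  | succ n hin ih =>
    rw [Finset.sum_Icc_succ_top (by omega), hstep n, mul_add, Nat.add_sub_cancel]
    omega

end Repunit

/-- `m` is a sum of exactly `k` repunits in base `b`, encoded by the multiset of their lengths.
As `repunit b 0 = 0` is allowed, this amounts to at most `k` positive repunits. -/
def IsSumOfRepunits (b k m : ℕ) : Prop :=
  ∃ e : Multiset ℕ, e.card = k ∧ (e.map (repunit b)).sum = m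

namespace IsSumOfRepunits

variable {b k k' m m' : ℕ}

theorem add (h : IsSumOfRepunits b k m) (h' : IsSumOfRepunits b k' m') :
    IsSumOfRepunits b (k + k') (m + m') := by
  obtain ⟨e, rfl, rfl⟩ := h
  obtain ⟨e', rfl, rfl⟩ := h'
  exact ⟨e + e', by simp, by simp⟩

theorem mul_repunit (b k i : ℕ) : IsSumOfRepunits b k (k * repunit b i) :=
  ⟨Multiset.replicate k i, by simp, by simp⟩

theorem mono (h : IsSumOfRepunits b k m) (hk : k ≤ k') : IsSumOfRepunits b k' m := by
  simpa [hk, repunit_zero] using h.add (mul_repunit b (k' - k) 0)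

theorem base_mul_add (h : IsSumOfRepunits b k m) : IsSumOfRepunits b k (b * m + k) := by
  obtain ⟨e, rfl, rfl⟩ := h
  exact ⟨e.map (· + 1), by simp, by
    simp [repunit_succ, Multiset.sum_map_add, Multiset.sum_map_mul_left]⟩

/- The step `repunit b (i + 1) = b * repunit b i + 1` trades one repunit for `b` shorter ones. -/
theorem split (hb : 0 < b) (h : IsSumOfRepunits b k (m + 1)) :
    IsSumOfRepunits b (k + (b - 1)) m := by
  obtain ⟨e, rfl, he⟩ := h
  obtain ⟨i, hi, hpos⟩ : ∃ i ∈ e, repunit b i ≠ 0 := by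
    by_contra! hzero
    simp [Multiset.map_congr rfl hzero] at he
  obtain ⟨i, rfl⟩ := Nat.exists_eq_succ_of_ne_zero fun hi0 : i = 0 ↦ hpos (hi0 ▸ repunit_zero b)
  obtain ⟨e, rfl⟩ := Multiset.exists_cons_of_mem hi
  have hrest : IsSumOfRepunits b e.card (e.map (repunit b)).sum := ⟨e, rfl, rfl⟩
  convert hrest.add (mul_repunit b b i) using 1
  · rw [Multiset.card_cons]
    omega
  · rw [Multiset.map_cons, Multiset.sum_cons, repunit_succ] at he
    omega

theorem split_iterate (hb : 0 < b) (t : ℕ) (h : IsSumOfRepunits b k (m + t)) :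
    IsSumOfRepunits b (k + (b - 1) * t) m := by
  induction t generalizing k with
  | zero => simpa using h
  | succ t ih =>
    convert ih (h.split hb) using 1
    ring

end IsSumOfRepunits

theorem exists_isSumOfRepunits_sum_digits {b : ℕ} (hb : 1 < b) (N : ℕ) :
    ∃ m, (b - 1) * m + (b.digits N).sum = N ∧ IsSumOfRepunits b (b.digits N).sum m := by
  induction N using Nat.strong_induction_on with
  | _ N ih =>
    rcases N.eq_zero_or_pos with rfl | hN
    · exact ⟨0, by simp, by simpa using IsSumOfRepunits.mul_repunit b 0 0⟩
    obtain ⟨m, hm, hsum⟩ := ih (N / b) (Nat.div_lt_self hN hb)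
    have hr : N % b < b := Nat.mod_lt _ (by omega)
    have hdigits := sum_digits_mul_add hb (N / b) hr
    rw [Nat.div_add_mod] at hdigits
    refine ⟨b * m + (b.digits (N / b)).sum, ?_, ?_⟩
    · calc (b - 1) * (b * m + (b.digits (N / b)).sum) + (b.digits N).sum
          = b * ((b - 1) * m) + ((b - 1) + 1) * (b.digits (N / b)).sum + N % b := by
            rw [hdigits]
            ring
        _ = b * ((b - 1) * m + (b.digits (N / b)).sum) + N % b := by
            rw [Nat.sub_add_cancel hb.le]
            ring
        _ = N := by rw [hm, Nat.div_add_mod]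
    · rw [hdigits]
      simpa [repunit_zero] using hsum.base_mul_add.add (IsSumOfRepunits.mul_repunit b (N % b) 0)

theorem isSumOfRepunits_iff {b k m : ℕ} (hb : 1 < b) :
    IsSumOfRepunits b k m ↔ (b.digits ((b - 1) * m + k)).sum ≤ k := by
  constructor
  · rintro ⟨e, rfl, rfl⟩
    induction e using Multiset.induction with
    | empty => simp
    | cons i e ih =>
      have hpow : (b - 1) * ((i ::ₘ e).map (repunit b)).sum + (i ::ₘ e).card =
          b ^ i + ((b - 1) * (e.map (repunit b)).sum + e.card) := by
        rw [← sub_one_mul_repunit_add_one (by omega) i, Multiset.map_cons, Multiset.sum_cons,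
          Multiset.card_cons]
        ring
      have hadd := sum_digits_add_le hb (b ^ i) ((b - 1) * (e.map (repunit b)).sum + e.card)
      rw [sum_digits_pow hb] at hadd
      rw [hpow, Multiset.card_cons]
      omega
  · intro h
    obtain ⟨M, hM, hsum⟩ := exists_isSumOfRepunits_sum_digits hb ((b - 1) * m + k)
    have hle : (b - 1) * m ≤ (b - 1) * M := by omega
    obtain ⟨t, rfl⟩ := Nat.exists_eq_add_of_le (Nat.le_of_mul_le_mul_left hle (by omega))
    convert hsum.split_iterate (by omega) t using 1
    rw [mul_add] at hM
    omega

/-- The least number of repunits in base `b` with sum `m`. -/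
noncomputable def repunitLength (b m : ℕ) : ℕ :=
  sInf {k | IsSumOfRepunits b k m}

section RepunitLength

variable {b : ℕ}

theorem isSumOfRepunits_repunitLength (b m : ℕ) : IsSumOfRepunits b (repunitLength b m) m :=
  Nat.sInf_mem (s := {k | IsSumOfRepunits b k m})
    ⟨m, by simpa [repunit] using IsSumOfRepunits.mul_repunit b m 1⟩

theorem repunitLength_le_iff {k m : ℕ} : repunitLength b m ≤ k ↔ IsSumOfRepunits b k m :=
  ⟨(isSumOfRepunits_repunitLength b m).mono, fun h ↦ Nat.sInf_le h⟩

theorem repunitLength_le_iff_sum_digits_le (hb : 1 < b) {k m : ℕ} :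
    repunitLength b m ≤ k ↔ (b.digits ((b - 1) * m + k)).sum ≤ k :=
  repunitLength_le_iff.trans (isSumOfRepunits_iff hb)

theorem repunitLength_zero (b : ℕ) : repunitLength b 0 = 0 :=
  Nat.le_zero.1 (repunitLength_le_iff.2 (by simpa using IsSumOfRepunits.mul_repunit b 0 0))

theorem repunitLength_pos {m : ℕ} (hm : 0 < m) : 0 < repunitLength b m := by
  obtain ⟨e, hcard, hsum⟩ := isSumOfRepunits_repunitLength b m
  rw [← hcard, Multiset.card_pos]
  rintro rfl
  exact hm.ne (by simpa using hsum)

theorem repunitLength_add_le (b m m' : ℕ) :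
    repunitLength b (m + m') ≤ repunitLength b m + repunitLength b m' :=
  repunitLength_le_iff.2
    ((isSumOfRepunits_repunitLength b m).add (isSumOfRepunits_repunitLength b m'))

theorem sub_one_mul_add_repunitLength_le_pow (hb : 1 < b) {m n : ℕ} (hm : m < repunit b n) :
    (b - 1) * m + repunitLength b m ≤ b ^ n := by
  have hpow := sub_one_mul_repunit_add_one (by omega : 0 < b) n
  have hmul : (b - 1) * m ≤ (b - 1) * repunit b n := Nat.mul_le_mul_left _ hm.le
  have hlen : repunitLength b m ≤ b ^ n - (b - 1) * m := by
    rw [repunitLength_le_iff_sum_digits_le hb, Nat.add_sub_cancel' (by omega), sum_digits_pow hb]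
    omega
  omega

theorem repunitLength_mod_repunit_le (hb : 1 < b) (n m : ℕ) :
    repunitLength b (m % repunit b n) ≤ repunitLength b m := by
  rcases n.eq_zero_or_pos with rfl | hn
  · rw [repunit_zero, Nat.mod_zero]
  have hlt : m % repunit b n < repunit b n :=
    Nat.mod_lt _ (hn.trans_le (le_repunit (by omega) n))
  rcases (m % repunit b n).eq_zero_or_pos with hzero | hpos
  · rw [hzero, repunitLength_zero]
    exact Nat.zero_le _
  set k := repunitLength b m with hk
  rcases lt_or_ge ((b - 1) * (m % repunit b n) + k) (b ^ n) with hsmall | hlarge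
  · have hmod : (b - 1) * (m % repunit b n) + k ≡ (b - 1) * m + k [MOD b ^ n - 1] := by
      rw [← sub_one_mul_repunit_add_one (by omega : 0 < b) n, Nat.add_sub_cancel]
      exact ((Nat.mod_modEq m _).mul_left' (b - 1)).add_right k
    have hpos' : 0 < (b - 1) * (m % repunit b n) := Nat.mul_pos (by omega) hpos
    have hle : (b - 1) * (m % repunit b n) ≤ (b - 1) * m :=
      Nat.mul_le_mul_left _ (Nat.mod_le m _)
    rw [repunitLength_le_iff_sum_digits_le hb]
    exact (sum_digits_le_of_modEq hb (by omega) hsmall (by omega) hmod).trans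
      ((repunitLength_le_iff_sum_digits_le hb).1 hk.ge)
  · have := sub_one_mul_add_repunitLength_le_pow hb hlt
    omega

theorem repunitLength_of_add_add_one_eq_repunit (hb : 1 < b) {n d m : ℕ} (hd : d + 2 ≤ n)
    (hm : m + d + 1 = repunit b n) : repunitLength b m = (b - 1) * (d + 1) + 1 := by
  have hpow : (b - 1) * m + (b - 1) * (d + 1) + 1 = b ^ n := by
    rw [← sub_one_mul_repunit_add_one (by omega : 0 < b) n, ← hm]
    ring
  apply le_antisymm
  · rw [repunitLength_le_iff_sum_digits_le hb, ← add_assoc, hpow, sum_digits_pow hb]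
    omega
  · rw [Nat.succ_le_iff, ← not_le, repunitLength_le_iff_sum_digits_le hb, not_le]
    have hcompl := sum_digits_add_sum_digits_of_add_add_one_eq_pow hb (y := 0) hpow
    rw [Nat.digits_zero, List.sum_nil, add_zero] at hcompl
    rw [hcompl, mul_comm n]
    exact Nat.mul_lt_mul_of_pos_left (by omega) (by omega)

/- With `x = (b - 1) * m + repunitLength b m - 1`, the summand `m'` is read off the base-`b`
expansion of the complement `b ^ n - 1 - x`. -/
theorem exists_repunitLength_add_of_lt_repunit (hb : 1 < b) {m n : ℕ} (hn : 1 < n)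
    (hm : m < repunit b n) :
    ∃ d m', d + 2 ≤ n ∧ m + m' + d + 1 = repunit b n ∧
      repunitLength b (m + m') = repunitLength b m + repunitLength b m' := by
  have hpow := sub_one_mul_repunit_add_one (by omega : 0 < b) n
  rcases m.eq_zero_or_pos with rfl | hm0
  · exact ⟨0, repunit b n - 1, by omega, by omega, by simp [repunitLength_zero]⟩
  obtain ⟨j, hj⟩ := Nat.exists_eq_add_one_of_ne_zero (repunitLength_pos (b := b) hm0).ne'
  obtain ⟨y, hy⟩ : ∃ y, (b - 1) * m + j + y + 1 = b ^ n := by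
    have := sub_one_mul_add_repunitLength_le_pow hb hm
    exact ⟨b ^ n - ((b - 1) * m + j + 1), by omega⟩
  have hcompl := sum_digits_add_sum_digits_of_add_add_one_eq_pow hb hy
  have hmin : j < (b.digits ((b - 1) * m + j)).sum := by
    rw [← not_le, ← repunitLength_le_iff_sum_digits_le hb]
    omega
  obtain ⟨w, hw, hwsum⟩ := exists_isSumOfRepunits_sum_digits hb y
  have hwlen := repunitLength_le_iff.2 hwsum
  have hle : (b - 1) * (m + w) ≤ (b - 1) * repunit b n := by linarith
  obtain ⟨D, hD⟩ := Nat.exists_eq_add_of_le (Nat.le_of_mul_le_mul_left hle (by omega))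
  have hjD : j + (b.digits y).sum = (b - 1) * D := by
    rw [hD] at hpow
    linarith
  have hDn : D < n := Nat.lt_of_mul_lt_mul_left (a := b - 1) (by linarith)
  have hD0 : D ≠ 0 := by
    rintro rfl
    have hw0 : 0 < w := by omega
    have := repunitLength_pos (b := b) hw0
    omega
  obtain ⟨d, rfl⟩ := Nat.exists_eq_add_one_of_ne_zero hD0
  refine ⟨d, w, hDn, hD.symm, le_antisymm (repunitLength_add_le b m w) ?_⟩
  rw [repunitLength_of_add_add_one_eq_repunit hb hDn hD.symm]
  omega

end RepunitLength

theorem eq_mod_and_eq_add_mul_div {R a k k' m m' : ℕ} (hcop : R.gcd a = 1) (hm : m < R)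
    (h : k * R + a * m = k' * R + a * m') : m = m' % R ∧ k = k' + a * (m' / R) := by
  have hmod : a * m ≡ a * m' [MOD R] := by
    simpa [Nat.ModEq, Nat.add_mod] using congrArg (· % R) h
  have hmm' : m = m' % R := by
    rw [← Nat.ModEq.cancel_left_of_coprime hcop hmod, Nat.mod_eq_of_lt hm]
  refine ⟨hmm', Nat.eq_of_mul_eq_mul_right (by omega : 0 < R) ?_⟩
  have hdiv := Nat.div_add_mod m' R
  rw [← hmm'] at hdiv
  rw [← hdiv] at h
  linarith

section Apery

variable {b a n : ℕ}

theorem mem_grep_iff {x : ℕ} :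
    x ∈ grep b a n ↔ ∃ k m, IsSumOfRepunits b k m ∧ x = k * repunit b n + a * m := by
  constructor
  · intro hx
    induction hx using AddSubmonoid.closure_induction with
    | mem x hx =>
      obtain ⟨i, -, rfl⟩ := hx
      exact ⟨1, _, IsSumOfRepunits.mul_repunit b 1 (i - 1), by simp [aseq]⟩
    | zero => exact ⟨0, _, IsSumOfRepunits.mul_repunit b 0 0, by simp⟩
    | add x y _ _ hx hy =>
      obtain ⟨k, m, h, rfl⟩ := hx
      obtain ⟨k', m', h', rfl⟩ := hy
      exact ⟨_, _, h.add h', by ring⟩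
  · rintro ⟨_, _, ⟨e, rfl, rfl⟩, rfl⟩
    have hsum : (e.map fun i ↦ aseq b a n (i + 1)).sum =
        e.card * repunit b n + a * (e.map (repunit b)).sum := by
      simp [aseq, Multiset.sum_map_add, Multiset.sum_map_mul_left]
    rw [← hsum]
    refine multiset_sum_mem _ fun x hx ↦ ?_
    obtain ⟨i, -, rfl⟩ := Multiset.mem_map.1 hx
    exact AddSubmonoid.subset_closure ⟨i + 1, by omega, rfl⟩

theorem mul_repunit_add_mul_mem_grep_iff (hb : 1 < b) (hcop : (repunit b n).gcd a = 1)
    {k m : ℕ} (hm : m < repunit b n) :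
    k * repunit b n + a * m ∈ grep b a n ↔ repunitLength b m ≤ k := by
  refine ⟨fun h ↦ ?_, fun h ↦ mem_grep_iff.2 ⟨k, m, repunitLength_le_iff.1 h, rfl⟩⟩
  obtain ⟨k', m', hsum, heq⟩ := mem_grep_iff.1 h
  obtain ⟨rfl, rfl⟩ := eq_mod_and_eq_add_mul_div hcop hm heq
  calc repunitLength b (m' % repunit b n) ≤ repunitLength b m' :=
        repunitLength_mod_repunit_le hb n m'
    _ ≤ k' := repunitLength_le_iff.2 hsum
    _ ≤ k' + a * (m' / repunit b n) := Nat.le_add_right _ _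

/-- The least `k * r_b(n) + a * m` over the `k` for which `m` is a sum of `k` repunits; for
`m < r_b(n)` these are the elements of the Apéry set of `S_a(b,n)` with respect to `r_b(n)`. -/
noncomputable def aperyElem (b a n m : ℕ) : ℕ :=
  repunitLength b m * repunit b n + a * m

theorem aperyElem_mem_grep (b a n m : ℕ) : aperyElem b a n m ∈ grep b a n :=
  mem_grep_iff.2 ⟨_, m, isSumOfRepunits_repunitLength b m, rfl⟩

theorem mem_apery_grep_iff (hb : 1 < b) (hn : 0 < n) (hcop : (repunit b n).gcd a = 1) {x : ℕ} :
    x ∈ Apery (grep b a n) (repunit b n) ↔ ∃ m < repunit b n, x = aperyElem b a n m := by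
  have hmem {k m : ℕ} := mul_repunit_add_mul_mem_grep_iff hb hcop (k := k) (m := m)
  constructor
  · rintro ⟨hx, hsub⟩
    obtain ⟨k, M, -, rfl⟩ := mem_grep_iff.1 hx
    have hlt : M % repunit b n < repunit b n :=
      Nat.mod_lt _ (hn.trans_le (le_repunit (by omega) n))
    have hred : k * repunit b n + a * M =
        (k + a * (M / repunit b n)) * repunit b n + a * (M % repunit b n) := by
      conv_lhs => rw [← Nat.div_add_mod M (repunit b n)]
      ring
    rw [hred] at hx hsub ⊢
    generalize k + a * (M / repunit b n) = k' at hx hsub ⊢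
    refine ⟨_, hlt, ?_⟩
    suffices k' ≤ repunitLength b (M % repunit b n) by
      rw [aperyElem, le_antisymm this ((hmem hlt).1 hx)]
    by_contra! hlong
    obtain ⟨l, rfl⟩ := Nat.exists_eq_add_one_of_ne_zero (by omega : k' ≠ 0)
    exact hsub ⟨_, (hmem hlt).2 (Nat.le_of_lt_succ hlong), by ring⟩
  · rintro ⟨m, hm, rfl⟩
    refine ⟨aperyElem_mem_grep b a n m, ?_⟩
    rintro ⟨t, ht, heq⟩
    rw [aperyElem] at heq
    rcases hlen : repunitLength b m with _ | l
    · obtain rfl : m = 0 := by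
        by_contra hm0
        exact (repunitLength_pos (Nat.pos_of_ne_zero hm0)).ne' hlen
      simp only [hlen] at heq
      omega
    · obtain rfl : t = l * repunit b n + a * m := by
        rw [hlen] at heq
        linarith
      have := (hmem hm).1 ht
      omega

theorem aperyElem_add {m m' : ℕ}
    (h : repunitLength b (m + m') = repunitLength b m + repunitLength b m') :
    aperyElem b a n (m + m') = aperyElem b a n m + aperyElem b a n m' := by
  simp only [aperyElem, h]
  ring

theorem le_and_repunitLength_le_of_aperyElem_eq_add (hb : 1 < b) (ha : 0 < a)
    (hcop : (repunit b n).gcd a = 1) {m M s : ℕ} (hM : M < repunit b n) (hs : s ∈ grep b a n)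
    (h : aperyElem b a n M = aperyElem b a n m + s) :
    m ≤ M ∧ repunitLength b m ≤ repunitLength b M := by
  obtain ⟨k, m', hsum, rfl⟩ := mem_grep_iff.1 hs
  obtain ⟨hmod, hlen⟩ := eq_mod_and_eq_add_mul_div hcop hM
    (k := repunitLength b M) (k' := repunitLength b m + k) (m' := m + m')
    (by rw [aperyElem, aperyElem] at h; linarith)
  have hle : repunitLength b M ≤ repunitLength b m + k := by
    rw [hmod]
    exact (repunitLength_mod_repunit_le hb n _).trans (repunitLength_le_iff.2
      ((isSumOfRepunits_repunitLength b m).add hsum))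
  have hdiv : (m + m') / repunit b n = 0 :=
    (Nat.mul_eq_zero.1 (by omega : a * ((m + m') / repunit b n) = 0)).resolve_left ha.ne'
  rw [Nat.mod_eq_of_lt (Nat.lt_of_div_eq_zero (by omega) hdiv)] at hmod
  omega

theorem eq_of_aperyElem_eq_add (hb : 1 < b) (ha : 0 < a) (hcop : (repunit b n).gcd a = 1)
    {d m M s : ℕ} (hd : d + 2 ≤ n) (hm : m + d + 1 = repunit b n) (hM : M < repunit b n)
    (hs : s ∈ grep b a n) (h : aperyElem b a n M = aperyElem b a n m + s) : M = m := by
  obtain ⟨hmM, hlen⟩ := le_and_repunitLength_le_of_aperyElem_eq_add hb ha hcop hM hs h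
  obtain ⟨d', hd'⟩ : ∃ d', M + d' + 1 = repunit b n := ⟨repunit b n - (M + 1), by omega⟩
  rw [repunitLength_of_add_add_one_eq_repunit hb hd hm,
    repunitLength_of_add_add_one_eq_repunit hb (by omega) hd'] at hlen
  have hdd' : d + 1 ≤ d' + 1 :=
    Nat.le_of_mul_le_mul_left (Nat.le_of_add_le_add_right hlen) (by omega)
  omega

theorem aseq_add_sub_one_mul_sum_Icc (hb : 1 < b) (a : ℕ) {i M : ℕ} (hi : 2 ≤ i) (hin : i ≤ n)
    (hM : M + (n - i) + 1 = repunit b n) :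
    aseq b a n i + (b - 1) * ∑ j ∈ Finset.Icc i n, aseq b a n j = aperyElem b a n M := by
  have hsum := repunit_add_sub_one_mul_sum_Icc (by omega : 0 < b) (by omega : 0 < i) hin
  obtain rfl : M = repunit b (i - 1) + (b - 1) * ∑ j ∈ Finset.Icc i n, repunit b (j - 1) := by
    omega
  have hcard : n + 1 - i = n - i + 1 := by omega
  rw [aperyElem, repunitLength_of_add_add_one_eq_repunit hb (by omega) hM]
  simp only [aseq, Finset.sum_add_distrib, Finset.sum_const, Nat.card_Icc, smul_eq_mul,
    ← Finset.mul_sum, hcard]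
  ring

end Apery

/-- The maximal elements of `Ap(S_a(b,n), a_1)` with respect to the order `y ≼ x ↔ x - y ∈ S`
(i.e. `∃ s ∈ S, x = y + s`) are exactly the `α_i = a_i + (b−1)·∑_{j=i}^n a_j`
for `i = 2, …, n`. -/
theorem stmt_16 (b a n : ℕ) (hb : 1 < b) (hn : 1 < n) (ha : 0 < a)
    (hgcd : Nat.gcd (repunit b n) a = 1) :
    {ω | ω ∈ Apery (grep b a n) (repunit b n) ∧
        ∀ ω' ∈ Apery (grep b a n) (repunit b n),
          (∃ s ∈ grep b a n, ω' = ω + s) → ω' = ω}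
      = {x | ∃ i, 2 ≤ i ∧ i ≤ n ∧
          x = aseq b a n i + (b - 1) * ∑ j ∈ Finset.Icc i n, aseq b a n j} := by
  have hR := le_repunit (by omega : 0 < b) n
  have hApery {x : ℕ} := mem_apery_grep_iff hb (by omega : 0 < n) hgcd (x := x)
  ext ω
  constructor
  · rintro ⟨hω, hmax⟩
    obtain ⟨m, hm, rfl⟩ := hApery.1 hω
    obtain ⟨d, m', hd, hm', hlen⟩ := exists_repunitLength_add_of_lt_repunit hb hn hm
    refine ⟨n - d, by omega, by omega, ?_⟩
    rw [aseq_add_sub_one_mul_sum_Icc hb a (M := m + m') (by omega) (by omega) (by omega)]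
    exact (hmax _ (hApery.2 ⟨m + m', by omega, rfl⟩)
      ⟨_, aperyElem_mem_grep b a n m', aperyElem_add hlen⟩).symm
  · rintro ⟨i, hi, hin, rfl⟩
    obtain ⟨m, hm⟩ : ∃ m, m + (n - i) + 1 = repunit b n := ⟨repunit b n - (n - i + 1), by omega⟩
    rw [aseq_add_sub_one_mul_sum_Icc hb a hi hin hm]
    refine ⟨hApery.2 ⟨m, by omega, rfl⟩, ?_⟩
    rintro ω' hω' ⟨s, hs, heq⟩
    obtain ⟨m', hm', rfl⟩ := hApery.1 hω'
    rw [eq_of_aperyElem_eq_add hb ha hgcd (by omega) hm hm' hs heq]
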